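/- Let $k \in \mathbb{Z}$ with $|k| > 1$ and $t \in (-1,1]$. Define $A(k,t) \subseteq \mathbb{Z}$ as follows: $A(k,t) = \{k\}$ if $t \in [-2/3,-1/3] \cup [1/3,2/3]$; $A(k,t) = \{k, -k\}$ if $t \in (-1/3,1/3)$; $A(k,t) = \{k, -k-1\}$ if $t \in (2/3,1]$; $A(k,t) = \{k, -k+1\}$ if $t \in (-1,-2/3)$. Then for every $n \in \mathbb{Z}$ with $n \notin A(k,t)$, the inequality $|(2n+t)^2 - (2k+t)^2| \ge \frac{4}{3}(2|k| - 1)$ holds. -/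

import Mathlib

open Classical in
/-- The index set `A(k,t)` for `k : ℤ` and `t ∈ (-1,1]`. Within `(-1,1]` the last branch is exactly
`t ∈ [-2/3,-1/3] ∪ [1/3,2/3]`; at the four break points `t = ±1/3, ±2/3` the set is `{k}`, the
smaller of the two sets attached to the adjacent intervals. -/
noncomputable def Akt (k : ℤ) (t : ℝ) : Set ℤ :=
  if t ∈ Set.Ioo (-1 / 3 : ℝ) (1 / 3) then {k, -k}
  else if t ∈ Set.Ioc (2 / 3 : ℝ) 1 then {k, -k - 1}
  else if t ∈ Set.Ioo (-1 : ℝ) (-2 / 3) then {k, -k + 1}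
  else {k}

/-!
Factor `(2n + t)² - (2k + t)² = 4 (n - k) (n + k + t)`. For `t ∈ (-1, 1]`, the set `A(k, t)`
consists of `k` and the integers `n` with `|n + k + t| < 1/3`, so off `A(k, t)` neither factor is
small. By the triangle inequality `2|k| ≤ |n - k| + |n + k|`: if `|n + k| ≤ 1`, this gives
`|n - k| ≥ 2|k| - 1`; otherwise both `|n - k|` and `|n + k + t|` are at least `1`, so three times
their product is at least their sum, which is at least `2|k| - 1`.
-/

theorem two_mul_abs_le_abs_sub_add_abs_add {R : Type*} [CommRing R] [LinearOrder R]
    [IsStrictOrderedRing R] (a b : R) : 2 * |b| ≤ |a - b| + |a + b| := by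
  calc 2 * |b| = |(a - b) - (a + b)| := by
        rw [show (a - b) - (a + b) = -(2 * b) by ring, abs_neg, abs_mul, abs_two]
    _ ≤ |a - b| + |a + b| := abs_sub _ _

section OrderedField

variable {R : Type*} [Field R] [LinearOrder R] [IsStrictOrderedRing R] {k n : ℤ} {t : R}

theorem abs_intCast_add_lt_one_third_iff {m : ℤ} (ht : |t| ≤ 1) :
    |(m : R) + t| < 1 / 3 ↔
      m = 0 ∧ |t| < 1 / 3 ∨ m = -1 ∧ 2 / 3 < t ∨ m = 1 ∧ t < -2 / 3 := by
  obtain ⟨ht_lower, ht_upper⟩ := abs_le.mp ht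
  simp only [abs_lt]
  constructor
  · rintro ⟨hlower, hupper⟩
    have hm_lower : -2 < m := by
      have : (-2 : R) < m := by linarith
      exact_mod_cast this
    have hm_upper : m < 2 := by
      have : (m : R) < 2 := by linarith
      exact_mod_cast this
    obtain rfl | rfl | rfl : m = 0 ∨ m = -1 ∨ m = 1 := by omega
    · exact .inl ⟨rfl, by simpa using hlower, by simpa using hupper⟩
    · push_cast at hlower
      exact .inr (.inl ⟨rfl, by linarith⟩)
    · push_cast at hupper
      exact .inr (.inr ⟨rfl, by linarith⟩)
  · rintro (⟨rfl, h⟩ | ⟨rfl, h⟩ | ⟨rfl, h⟩)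
    · simpa using h
    all_goals
      push_cast
      constructor <;> linarith

theorem two_mul_abs_sub_one_le_three_mul_abs_mul_abs (hnk : n ≠ k) (ht : |t| ≤ 1)
    (hsum : 1 / 3 ≤ |(n : R) + k + t|) :
    2 * |(k : R)| - 1 ≤ 3 * (|(n : R) - k| * |(n : R) + k + t|) := by
  have htri := two_mul_abs_le_abs_sub_add_abs_add (n : R) k
  have hdiff : 1 ≤ |(n : R) - k| := by exact_mod_cast Int.one_le_abs (sub_ne_zero.mpr hnk)
  have hshift : |(n : R) + k| - 1 ≤ |(n : R) + k + t| := by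
    linarith [abs_sub_abs_le_abs_add ((n : R) + k) t]
  set d := |(n : R) - k|
  set u := |(n : R) + k + t|
  obtain hsmall | hlarge : |n + k| ≤ 1 ∨ 2 ≤ |n + k| := by omega
  · have hsmall' : |(n : R) + k| ≤ 1 := by exact_mod_cast hsmall
    calc 2 * |(k : R)| - 1 ≤ d := by linarith
      _ ≤ d * (3 * u) := le_mul_of_one_le_right (by linarith) (by linarith)
      _ = 3 * (d * u) := by ring
  · have hlarge' : (2 : R) ≤ |(n : R) + k| := by exact_mod_cast hlarge
    have hexcess : 0 ≤ d * (2 * u - 1) + u * (d - 1) :=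
      add_nonneg (mul_nonneg (by linarith) (by linarith)) (mul_nonneg (by linarith) (by linarith))
    calc 2 * |(k : R)| - 1 ≤ d + u := by linarith
      _ ≤ d + u + (d * (2 * u - 1) + u * (d - 1)) := le_add_of_nonneg_right hexcess
      _ = 3 * (d * u) := by ring

theorem statement4_general (hnk : n ≠ k) (ht : |t| ≤ 1) (hsum : 1 / 3 ≤ |(n : R) + k + t|) :
    4 / 3 * (2 * |(k : R)| - 1) ≤ |(2 * (n : R) + t) ^ 2 - (2 * (k : R) + t) ^ 2| := by
  calc 4 / 3 * (2 * |(k : R)| - 1)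
      ≤ 4 * (|(n : R) - k| * |(n : R) + k + t|) := by
        linarith [two_mul_abs_sub_one_le_three_mul_abs_mul_abs hnk ht hsum]
    _ = |4 * (((n : R) - k) * (n + k + t))| := by rw [abs_mul, abs_mul, Nat.abs_ofNat]
    _ = |(2 * (n : R) + t) ^ 2 - (2 * (k : R) + t) ^ 2| := by ring_nf

end OrderedField

theorem mem_Akt_iff {k n : ℤ} {t : ℝ} (ht : t ∈ Set.Ioc (-1 : ℝ) 1) :
    n ∈ Akt k t ↔ n = k ∨ |(n : ℝ) + k + t| < 1 / 3 := by
  obtain ⟨ht_lower, ht_upper⟩ := ht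
  have hsum := abs_intCast_add_lt_one_third_iff (m := n + k) (abs_le.mpr ⟨ht_lower.le, ht_upper⟩)
  push_cast at hsum
  rw [hsum, abs_lt, Akt]
  simp only [Set.mem_Ioo, Set.mem_Ioc]
  split_ifs <;> simp only [Set.mem_insert_iff, Set.mem_singleton_iff] <;> grind

theorem statement4 (k : ℤ) (hk : 1 < |k|) (t : ℝ) (ht : t ∈ Set.Ioc (-1 : ℝ) 1)
    (n : ℤ) (hn : n ∉ Akt k t) :
    |(2 * (n : ℝ) + t) ^ 2 - (2 * (k : ℝ) + t) ^ 2| ≥ (4 / 3) * (2 * |(k : ℝ)| - 1) := by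
  obtain ⟨hnk, hsum⟩ := not_or.mp (mt (mem_Akt_iff ht).mpr hn)
  exact statement4_general hnk (abs_le.mpr ⟨ht.1.le, ht.2⟩) (not_lt.mp hsum)
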